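/- For every R > 0 and every u ∈ H¹(Ω_R³) vanishing on ∂Ω_R³ ∩ ∂Λ, one has the quadratic form lower bound ∫_{Ω_R³} |∇u|² dx ≥ λ₁(Γ_R) ∫_{Ω_R³} |u|² dx. (This is the key estimate showing that the bottom of the essential spectrum of the Dirichlet Laplacian on the Fichera layer Λ is at least λ₁(Γ).) -/

import Mathlib

/-!
For a slice `w = u(·, ·, t)`, `t > R`, the guide `Γ_t` is the disjoint union of `Γ_R` and of the two
arms `[R, t) × (-1, 0)` and `(-1, 0) × [R, t)`. On `Γ_R` the form inequality for `w` with constant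
`λ₁(Γ_R)` is the definition of `λ₁(Γ_R)`; on the arms `w` vanishes on the two long sides, so
Wirtinger's inequality gives the constant `π²`. Since `λ₁(Γ_R) ≤ π²`, the inequality holds on `Γ_t`,
and integrating over `t`, with `(∂₃u)²` dropped, gives the theorem.

For `λ₁(Γ_R) ≤ π²`, put `S(x) = -sin (π x)` and take the trial function equal to
`(1 + x₁) S(x₂) + S(x₁) (1 + x₂)` on the corner square `(-1, 0)²` and to `S` of the transversal
variable on the arms. Its restriction to each arm contributes nothing to `∫ |∇w|² - π² ∫ w²`, and
the corner contributes `-1`. This function is `a(x₁) b(x₂) + b(x₁) a(x₂)` with `a = 1 + φ` and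
`b = S ∘ φ` for the ramp `φ(x) = min(x, 0)`; it becomes admissible when `φ` is replaced by a `C¹`
approximation that keeps the values of `φ` at `-1` and on `[0, ∞)`.
-/

noncomputable section
open MeasureTheory Set Real

/-- The interval `I = (-1,0)`. -/
def II : Set ℝ := Set.Ioo (-1) 0

/-- The broken guide `Γ = {x ∈ ℝ² : -1 < min(x₁,x₂) < 0}`. -/
def Gam : Set (ℝ × ℝ) := {p | -1 < min p.1 p.2 ∧ min p.1 p.2 < 0}

/-- The box `□_L = {x : max(|x₁+1|,|x₂+1|) < L}`. -/
def Box (L : ℝ) : Set (ℝ × ℝ) := {p | |p.1 + 1| < L ∧ |p.2 + 1| < L}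

/-- The finite guide `Γ_R = Γ ∩ □_{R+1}`. -/
def GamR (R : ℝ) : Set (ℝ × ℝ) := Gam ∩ Box (R + 1)

/-- The Neumann part `Σ_R = ∂Γ_R ∩ ∂□_{R+1}` of the boundary. -/
def Sig (R : ℝ) : Set (ℝ × ℝ) := frontier (GamR R) ∩ frontier (Box (R + 1))

/-- The Dirichlet part `∂Γ_R ∖ Σ_R` of the boundary. -/
def DirB (R : ℝ) : Set (ℝ × ℝ) := frontier (GamR R) \ Sig R

/-- Squared gradient `|∇u|² = (∂₁u)² + (∂₂u)²`. -/
def gradSq2 (u : ℝ × ℝ → ℝ) (p : ℝ × ℝ) : ℝ :=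
  (fderiv ℝ u p (1, 0)) ^ 2 + (fderiv ℝ u p (0, 1)) ^ 2

/-- Admissible functions for the mixed problem on `Γ_R`: `C¹` up to the boundary
(modelled by a globally `C¹` extension) vanishing on the Dirichlet part. -/
def AdmR (R : ℝ) (u : ℝ × ℝ → ℝ) : Prop :=
  ContDiff ℝ 1 u ∧ ∀ p ∈ DirB R, u p = 0

/-- First Rayleigh quotient `λ₁(Γ_R)` of the mixed Dirichlet–Neumann Laplacian on `Γ_R`. -/
def lamR (R : ℝ) : ℝ :=
  sInf {r | ∃ u : ℝ × ℝ → ℝ, AdmR R u ∧ (∫ p in GamR R, (u p) ^ 2) ≠ 0 ∧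
    r = (∫ p in GamR R, gradSq2 u p) / ∫ p in GamR R, (u p) ^ 2}

/-- First Rayleigh quotient `λ₁(Γ)` of the Dirichlet Laplacian on the broken guide `Γ`. -/
def lamG : ℝ :=
  sInf {r | ∃ u : ℝ × ℝ → ℝ, ContDiff ℝ 1 u ∧ HasCompactSupport u ∧ tsupport u ⊆ Gam ∧
    (∫ p in Gam, (u p) ^ 2) ≠ 0 ∧
    r = (∫ p in Gam, gradSq2 u p) / ∫ p in Gam, (u p) ^ 2}

/-- `ω = √(π² − λ₁(Γ))`. -/
def omega : ℝ := Real.sqrt (π ^ 2 - lamG)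

/-- The Fichera layer `Λ = {x ∈ ℝ³ : -1 < min(x₁,x₂,x₃) < 0}`. -/
def Lam3 : Set (ℝ × ℝ × ℝ) :=
  {x | -1 < min x.1 (min x.2.1 x.2.2) ∧ min x.1 (min x.2.1 x.2.2) < 0}

/-- The residual domain `Ω_R³ = {x : x₃ > R and (x₁,x₂) ∈ Γ_{x₃}}`. -/
def Om3 (R : ℝ) : Set (ℝ × ℝ × ℝ) := {x | R < x.2.2 ∧ (x.1, x.2.1) ∈ GamR x.2.2}

/-- Squared gradient in 3D: `|∇u|² = (∂₁u)² + (∂₂u)² + (∂₃u)²`. -/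
def gradSq3 (u : ℝ × ℝ × ℝ → ℝ) (x : ℝ × ℝ × ℝ) : ℝ :=
  (fderiv ℝ u x (1, 0, 0)) ^ 2 + (fderiv ℝ u x (0, 1, 0)) ^ 2 + (fderiv ℝ u x (0, 0, 1)) ^ 2

open Filter Topology

section Wirtinger

variable {a b : ℝ} {v v' : ℝ → ℝ}

/-- With `q = φ' / φ` for a positive solution of `φ'' = -c φ`, this is the ground state
substitution: `(q v²)' = v'² - c v² - (v' - q v)²`. -/
lemma mul_integral_sq_le_integral_deriv_sq_of_riccati {c : ℝ} {q : ℝ → ℝ} (hab : a ≤ b)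
    (hv : ∀ x ∈ Icc a b, HasDerivAt v (v' x) x) (hv' : ContinuousOn v' (Icc a b))
    (hq : ∀ x ∈ Icc a b, HasDerivAt q (-(c + q x ^ 2)) x) (ha : v a = 0) (hb : v b = 0) :
    c * ∫ x in a..b, v x ^ 2 ≤ ∫ x in a..b, v' x ^ 2 := by
  have hvc : ContinuousOn v (Icc a b) := fun x hx => (hv x hx).continuousAt.continuousWithinAt
  have hqc : ContinuousOn q (Icc a b) := fun x hx => (hq x hx).continuousAt.continuousWithinAt
  have integrable {f : ℝ → ℝ} (hf : ContinuousOn f (Icc a b)) : IntervalIntegrable f volume a b :=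
    hf.intervalIntegrable_of_Icc hab
  have hderiv : ∀ x ∈ uIcc a b, HasDerivAt (fun x => q x * v x ^ 2)
      (-(c + q x ^ 2) * v x ^ 2 + q x * (2 * v x * v' x)) x := by
    intro x hx
    rw [uIcc_of_le hab] at hx
    exact ((hq x hx).mul ((hv x hx).pow 2)).congr_deriv (by simp)
  have hzero : ∫ x in a..b, (-(c + q x ^ 2) * v x ^ 2 + q x * (2 * v x * v' x)) = 0 := by
    rw [intervalIntegral.integral_eq_sub_of_hasDerivAt hderiv (integrable (by fun_prop)), ha, hb]
    ring
  rw [← sub_nonneg, ← intervalIntegral.integral_const_mul,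
    ← intervalIntegral.integral_sub (integrable (by fun_prop)) (integrable (by fun_prop)), ← hzero]
  refine intervalIntegral.integral_mono_on hab (integrable (by fun_prop))
    (integrable (by fun_prop)) fun x _ => ?_
  linarith [sq_nonneg (v' x - q x * v x)]

lemma sq_mul_integral_sq_le_integral_deriv_sq {μ : ℝ} (hab : a ≤ b) (hμ : 0 ≤ μ)
    (hμπ : μ * (b - a) < π) (hv : ∀ x ∈ Icc a b, HasDerivAt v (v' x) x)
    (hv' : ContinuousOn v' (Icc a b)) (ha : v a = 0) (hb : v b = 0) :
    μ ^ 2 * ∫ x in a..b, v x ^ 2 ≤ ∫ x in a..b, v' x ^ 2 := by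
  refine mul_integral_sq_le_integral_deriv_sq_of_riccati
    (q := fun x => -(μ * tan (μ * (x - (a + b) / 2)))) hab hv hv' (fun x hx => ?_) ha hb
  have hcos : cos (μ * (x - (a + b) / 2)) ≠ 0 := by
    refine (cos_pos_of_mem_Ioo ⟨?_, ?_⟩).ne' <;>
      nlinarith [mul_le_mul_of_nonneg_left hx.1 hμ, mul_le_mul_of_nonneg_left hx.2 hμ]
  have hlin : HasDerivAt (fun x => μ * (x - (a + b) / 2)) μ x := by
    simpa using ((hasDerivAt_id x).sub_const ((a + b) / 2)).const_mul μ
  refine (((hasDerivAt_tan hcos).comp x hlin).const_mul μ).neg.congr_deriv ?_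
  rw [one_div, ← inv_one_add_tan_sq hcos, inv_inv]
  ring

theorem wirtinger_inequality (hab : a < b) (hv : ∀ x ∈ Icc a b, HasDerivAt v (v' x) x)
    (hv' : ContinuousOn v' (Icc a b)) (ha : v a = 0) (hb : v b = 0) :
    (π / (b - a)) ^ 2 * ∫ x in a..b, v x ^ 2 ≤ ∫ x in a..b, v' x ^ 2 := by
  have hlen : 0 < b - a := sub_pos.2 hab
  have hlim : Tendsto (fun μ : ℝ => μ ^ 2 * ∫ x in a..b, v x ^ 2) (𝓝[<] (π / (b - a)))
      (𝓝 ((π / (b - a)) ^ 2 * ∫ x in a..b, v x ^ 2)) :=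
    ((continuous_pow 2).mul continuous_const).continuousAt.mono_left nhdsWithin_le_nhds
  refine le_of_tendsto hlim ?_
  filter_upwards [Ioo_mem_nhdsLT (div_pos pi_pos hlen)] with μ hμ
  exact sq_mul_integral_sq_le_integral_deriv_sq hab.le hμ.1.le ((lt_div_iff₀ hlen).1 hμ.2)
    hv hv' ha hb

end Wirtinger

section FormInequalities

variable {α β : Type*} [MeasurableSpace α] [MeasurableSpace β] {μ : Measure α} {ν : Measure β}
  {c : ℝ}

lemma mul_setIntegral_le_union {f g : α → ℝ} {s t : Set α} (hst : Disjoint s t)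
    (ht : MeasurableSet t) (hf : IntegrableOn f (s ∪ t) μ) (hg : IntegrableOn g (s ∪ t) μ)
    (hs : c * ∫ x in s, f x ∂μ ≤ ∫ x in s, g x ∂μ)
    (ht' : c * ∫ x in t, f x ∂μ ≤ ∫ x in t, g x ∂μ) :
    c * ∫ x in s ∪ t, f x ∂μ ≤ ∫ x in s ∪ t, g x ∂μ := by
  rw [setIntegral_union hst ht hf.left_of_union hf.right_of_union,
    setIntegral_union hst ht hg.left_of_union hg.right_of_union, mul_add]
  exact add_le_add hs ht'

lemma mul_setIntegral_prod_le [SFinite μ] [SFinite ν] {f g : α × β → ℝ} {s : Set α} {t : Set β}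
    (hs : MeasurableSet s) (hf : IntegrableOn f (s ×ˢ t) (μ.prod ν))
    (hg : IntegrableOn g (s ×ˢ t) (μ.prod ν))
    (h : ∀ x ∈ s, c * ∫ y in t, f (x, y) ∂ν ≤ ∫ y in t, g (x, y) ∂ν) :
    c * ∫ z in s ×ˢ t, f z ∂μ.prod ν ≤ ∫ z in s ×ˢ t, g z ∂μ.prod ν := by
  rw [setIntegral_prod f hf, setIntegral_prod g hg, ← integral_const_mul]
  rw [IntegrableOn, ← Measure.prod_restrict] at hf hg
  exact setIntegral_mono_on (hf.integral_prod_left.const_mul c) hg.integral_prod_left hs h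

end FormInequalities

section Guide

variable {R t : ℝ} {p : ℝ × ℝ}

lemma mem_GamR_iff :
    p ∈ GamR t ↔ p.1 ∈ Ioo (-1) t ∧ p.2 ∈ Ioo (-1) t ∧ (p.1 < 0 ∨ p.2 < 0) := by
  simp only [GamR, Gam, Box, mem_inter_iff, mem_ofPred_eq, lt_min_iff, min_lt_iff, abs_lt, mem_Ioo]
  constructor
  · rintro ⟨⟨⟨h₁, h₂⟩, hneg⟩, ⟨-, h₁t⟩, -, h₂t⟩
    exact ⟨⟨h₁, by linarith⟩, ⟨h₂, by linarith⟩, hneg⟩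
  · rintro ⟨⟨h₁, h₁t⟩, ⟨h₂, h₂t⟩, hneg⟩
    exact ⟨⟨⟨h₁, h₂⟩, hneg⟩, ⟨by linarith, by linarith⟩, by linarith, by linarith⟩

lemma isOpen_Gam : IsOpen Gam :=
  isOpen_Ioo.preimage (f := fun p : ℝ × ℝ => min p.1 p.2) (by fun_prop)

lemma isOpen_Box (L : ℝ) : IsOpen (Box L) :=
  (isOpen_Iio.preimage (f := fun p : ℝ × ℝ => |p.1 + 1|) (by fun_prop)).inter
    (isOpen_Iio.preimage (f := fun p : ℝ × ℝ => |p.2 + 1|) (by fun_prop))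

lemma isOpen_GamR (t : ℝ) : IsOpen (GamR t) := isOpen_Gam.inter (isOpen_Box _)

lemma GamR_mono (h : R ≤ t) : GamR R ⊆ GamR t := fun p hp =>
  ⟨hp.1, hp.2.1.trans_le (by linarith), hp.2.2.trans_le (by linarith)⟩

lemma GamR_subset_Ioo_prod (t : ℝ) : GamR t ⊆ Ioo (-1) t ×ˢ Ioo (-1) t := fun _ hp =>
  have ⟨h₁, h₂, _⟩ := mem_GamR_iff.1 hp
  ⟨h₁, h₂⟩

lemma integrableOn_Ioo_prod_Ioo {a b c d : ℝ} {f : ℝ × ℝ → ℝ} (hf : Continuous f) :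
    IntegrableOn f (Ioo a b ×ˢ Ioo c d) :=
  (hf.continuousOn.integrableOn_compact (isCompact_Icc.prod isCompact_Icc)).mono_set
    (prod_mono Ioo_subset_Icc_self Ioo_subset_Icc_self)

lemma integrableOn_GamR {f : ℝ × ℝ → ℝ} (hf : Continuous f) (t : ℝ) :
    IntegrableOn f (GamR t) :=
  (integrableOn_Ioo_prod_Ioo hf).mono_set (GamR_subset_Ioo_prod t)

lemma DirB_subset (R : ℝ) : DirB R ⊆ closure (GamR R) \ Gam := by
  rintro p ⟨hfr, hSig⟩
  refine ⟨hfr.1, fun hGam => hSig ⟨hfr, ?_⟩⟩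
  rw [(isOpen_GamR R).frontier_eq] at hfr
  rw [(isOpen_Box _).frontier_eq]
  exact ⟨closure_mono inter_subset_right hfr.1, fun hBox => hfr.2 ⟨hGam, hBox⟩⟩

lemma eq_neg_one_or_nonneg_of_mem_closure_GamR_sdiff (hp : p ∈ closure (GamR R) \ Gam) :
    p.1 = -1 ∨ p.2 = -1 ∨ 0 ≤ p.1 ∧ 0 ≤ p.2 := by
  obtain ⟨⟨h₁, -⟩, h₂, -⟩ :=
    closure_minimal ((GamR_subset_Ioo_prod R).trans
      (prod_mono Ioo_subset_Icc_self Ioo_subset_Icc_self)) (isClosed_Icc.prod isClosed_Icc) hp.1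
  have hGam := hp.2
  simp only [Gam, mem_ofPred_eq, lt_min_iff, min_lt_iff] at hGam
  grind

lemma AdmR.of_vanishing {w : ℝ × ℝ → ℝ} (hRt : R ≤ t) (hw : ContDiff ℝ 1 w)
    (hzero : ∀ p ∈ closure (GamR t) \ Gam, w p = 0) : AdmR R w :=
  ⟨hw, fun _ hp => hzero _ <|
    sdiff_subset_sdiff_left (closure_mono (GamR_mono hRt)) (DirB_subset R hp)⟩

lemma swap_mem_Gam_iff : p.swap ∈ Gam ↔ p ∈ Gam := by
  simp only [Gam, mem_ofPred_eq, Prod.fst_swap, Prod.snd_swap, min_comm]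

lemma swap_mem_GamR_iff : p.swap ∈ GamR t ↔ p ∈ GamR t := by
  simp only [mem_GamR_iff, Prod.fst_swap, Prod.snd_swap]
  tauto

lemma swap_mem_closure_GamR_sdiff_Gam (hp : p ∈ closure (GamR t) \ Gam) :
    p.swap ∈ closure (GamR t) \ Gam :=
  ⟨map_mem_closure continuous_swap hp.1 fun _ => swap_mem_GamR_iff.2,
    fun h => hp.2 (swap_mem_Gam_iff.1 h)⟩

lemma mk_mem_closure_GamR_sdiff_Gam {x y : ℝ} (hx : x ∈ Ico 0 t) (hy : y = -1 ∨ y = 0) :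
    (x, y) ∈ closure (GamR t) \ Gam := by
  constructor
  · have hy' : y ∈ closure (Ioo (-1 : ℝ) 0) := by
      rw [closure_Ioo (by norm_num)]
      rcases hy with rfl | rfl <;> norm_num
    refine map_mem_closure (f := fun y => (x, y)) (by fun_prop) hy' fun s hs => ?_
    exact mem_GamR_iff.2 ⟨⟨by linarith [hx.1], hx.2⟩, ⟨hs.1, by linarith [hs.2, hx.1, hx.2]⟩,
      Or.inr hs.2⟩
  · simp only [Gam, mem_ofPred_eq, lt_min_iff, min_lt_iff]
    rcases hy with rfl | rfl <;> grind

lemma GamR_eq_union_arms (hR : 0 ≤ R) (hRt : R ≤ t) :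
    GamR t = GamR R ∪ Ico R t ×ˢ Ioo (-1) 0 ∪ Ioo (-1) 0 ×ˢ Ico R t := by
  ext p
  simp only [mem_union, mem_GamR_iff, mem_prod, mem_Ico, mem_Ioo]
  grind

lemma disjoint_GamR_arm : Disjoint (GamR R) (Ico R t ×ˢ Ioo (-1) 0) :=
  disjoint_left.2 fun _ hp hArm => (mem_GamR_iff.1 hp).1.2.not_ge hArm.1.1

lemma disjoint_GamR_union_arm_arm (hR : 0 ≤ R) :
    Disjoint (GamR R ∪ Ico R t ×ˢ Ioo (-1) 0) (Ioo (-1) 0 ×ˢ Ico R t) := by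
  refine disjoint_left.2 ?_
  rintro p (hp | hp) hArm
  · exact (mem_GamR_iff.1 hp).2.1.2.not_ge hArm.2.1
  · exact (hR.trans hp.1.1).not_gt hArm.1.2

end Guide

section SquaredGradient

lemma gradSq2_nonneg (w : ℝ × ℝ → ℝ) (p : ℝ × ℝ) : 0 ≤ gradSq2 w p :=
  add_nonneg (sq_nonneg _) (sq_nonneg _)

lemma continuous_gradSq2 {w : ℝ × ℝ → ℝ} (hw : ContDiff ℝ 1 w) : Continuous (gradSq2 w) := by
  have := hw.continuous_fderiv one_ne_zero
  unfold gradSq2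
  fun_prop

lemma continuous_gradSq3 {u : ℝ × ℝ × ℝ → ℝ} (hu : ContDiff ℝ 1 u) : Continuous (gradSq3 u) := by
  have := hu.continuous_fderiv one_ne_zero
  unfold gradSq3
  fun_prop

lemma hasCompactSupport_gradSq3 {u : ℝ × ℝ × ℝ → ℝ} (hu : HasCompactSupport u) :
    HasCompactSupport (gradSq3 u) :=
  (hu.fderiv ℝ).comp_left (g := fun L : ℝ × ℝ × ℝ →L[ℝ] ℝ =>
    L (1, 0, 0) ^ 2 + L (0, 1, 0) ^ 2 + L (0, 0, 1) ^ 2) (by simp)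

lemma gradSq2_comp_swap {w : ℝ × ℝ → ℝ} (hw : Differentiable ℝ w) (p : ℝ × ℝ) :
    gradSq2 (w ∘ Prod.swap) p = gradSq2 w p.swap := by
  have hswap : HasFDerivAt Prod.swap
      (ContinuousLinearEquiv.prodComm ℝ ℝ ℝ : ℝ × ℝ →L[ℝ] ℝ × ℝ) p :=
    (ContinuousLinearEquiv.prodComm ℝ ℝ ℝ).hasFDerivAt
  simp [gradSq2, ((hw p.swap).hasFDerivAt.comp p hswap).fderiv, add_comm]

lemma gradSq2_slice_le_gradSq3 {u : ℝ × ℝ × ℝ → ℝ} (hu : Differentiable ℝ u) (p : ℝ × ℝ) (t : ℝ) :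
    gradSq2 (fun q => u (q.1, q.2, t)) p ≤ gradSq3 u (p.1, p.2, t) := by
  have hincl : HasFDerivAt (fun q : ℝ × ℝ => (q.1, q.2, t))
      ((ContinuousLinearMap.fst ℝ ℝ ℝ).prod ((ContinuousLinearMap.snd ℝ ℝ ℝ).prod 0)) p :=
    hasFDerivAt_fst.prodMk (hasFDerivAt_snd.prodMk (hasFDerivAt_const t p))
  have hslice : HasFDerivAt (fun q : ℝ × ℝ => u (q.1, q.2, t)) _ p :=
    (hu (p.1, p.2, t)).hasFDerivAt.comp p hincl
  simp only [gradSq2, gradSq3, hslice.fderiv]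
  simp [sq_nonneg]

lemma gradSq2_mul_add_mul {a b : ℝ → ℝ} (ha : Differentiable ℝ a) (hb : Differentiable ℝ b)
    (p : ℝ × ℝ) :
    gradSq2 (fun q => a q.1 * b q.2 + b q.1 * a q.2) p =
      (deriv a p.1 * b p.2 + deriv b p.1 * a p.2) ^ 2 +
        (a p.1 * deriv b p.2 + b p.1 * deriv a p.2) ^ 2 := by
  have hfst {f : ℝ → ℝ} (hf : Differentiable ℝ f) :=
    (hf p.1).hasDerivAt.comp_hasFDerivAt p (hasFDerivAt_fst (𝕜 := ℝ) (p := p))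
  have hsnd {f : ℝ → ℝ} (hf : Differentiable ℝ f) :=
    (hf p.2).hasDerivAt.comp_hasFDerivAt p (hasFDerivAt_snd (𝕜 := ℝ) (p := p))
  have hsum : HasFDerivAt (fun q : ℝ × ℝ => a q.1 * b q.2 + b q.1 * a q.2) _ p :=
    ((hfst ha).mul (hsnd hb)).add ((hfst hb).mul (hsnd ha))
  simp only [gradSq2, hsum.fderiv, Function.comp_apply, add_apply, smul_apply,
    ContinuousLinearMap.coe_fst', ContinuousLinearMap.coe_snd', smul_eq_mul, mul_zero, mul_one,
    zero_add, add_zero]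
  ring

end SquaredGradient

section LongerGuide

variable {R t : ℝ} {w : ℝ × ℝ → ℝ}

lemma lamR_mul_le_of_admR (hw : AdmR R w) :
    lamR R * ∫ p in GamR R, w p ^ 2 ≤ ∫ p in GamR R, gradSq2 w p := by
  have hgrad (v : ℝ × ℝ → ℝ) : 0 ≤ ∫ p in GamR R, gradSq2 v p :=
    integral_nonneg (gradSq2_nonneg v)
  have hsq (v : ℝ × ℝ → ℝ) : 0 ≤ ∫ p in GamR R, v p ^ 2 := integral_nonneg fun p => sq_nonneg (v p)
  rcases (hsq w).eq_or_lt with hzero | hpos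
  · rw [← hzero, mul_zero]
    exact hgrad w
  · rw [← le_div_iff₀ hpos]
    refine csInf_le ⟨0, ?_⟩ ⟨w, hw, hpos.ne', rfl⟩
    rintro _ ⟨v, -, -, rfl⟩
    exact div_nonneg (hgrad v) (hsq v)

lemma wirtinger_inequality_strip (hw : ContDiff ℝ 1 w) {s : Set ℝ} (hs : MeasurableSet s)
    {c d : ℝ} (hcd : c < d) (hsq : IntegrableOn (fun p => w p ^ 2) (s ×ˢ Ioo c d))
    (hgrad : IntegrableOn (gradSq2 w) (s ×ˢ Ioo c d)) (hc : ∀ x ∈ s, w (x, c) = 0)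
    (hd : ∀ x ∈ s, w (x, d) = 0) :
    (π / (d - c)) ^ 2 * ∫ p in s ×ˢ Ioo c d, w p ^ 2 ≤ ∫ p in s ×ˢ Ioo c d, gradSq2 w p := by
  refine mul_setIntegral_prod_le hs hsq hgrad fun x hx => ?_
  simp only [← integral_Ioc_eq_integral_Ioo, ← intervalIntegral.integral_of_le hcd.le]
  have := hw.continuous_fderiv one_ne_zero
  have hgradc := continuous_gradSq2 hw
  have hderiv (y : ℝ) : HasDerivAt (fun y => w (x, y)) (fderiv ℝ w (x, y) (0, 1)) y :=
    (hw.differentiable one_ne_zero (x, y)).hasFDerivAt.comp_hasDerivAt y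
      ((hasDerivAt_const y x).prodMk (hasDerivAt_id y))
  calc (π / (d - c)) ^ 2 * ∫ y in c..d, w (x, y) ^ 2
      ≤ ∫ y in c..d, fderiv ℝ w (x, y) (0, 1) ^ 2 :=
        wirtinger_inequality hcd (fun y _ => hderiv y) (by fun_prop) (hc x hx) (hd x hx)
    _ ≤ ∫ y in c..d, gradSq2 w (x, y) :=
        intervalIntegral.integral_mono_on hcd.le
          (Continuous.intervalIntegrable (by fun_prop) c d)
          (Continuous.intervalIntegrable (by fun_prop) c d)
          fun y _ => le_add_of_nonneg_left (sq_nonneg _)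

lemma pi_sq_mul_le_on_arm (hR : 0 ≤ R) (hRt : R ≤ t) (hw : ContDiff ℝ 1 w)
    (hzero : ∀ p ∈ closure (GamR t) \ Gam, w p = 0) :
    π ^ 2 * ∫ p in Ico R t ×ˢ Ioo (-1) 0, w p ^ 2 ≤
      ∫ p in Ico R t ×ˢ Ioo (-1) 0, gradSq2 w p := by
  have harm : Ico R t ×ˢ Ioo (-1) 0 ⊆ GamR t :=
    GamR_eq_union_arms hR hRt ▸ subset_union_of_subset_left subset_union_right _
  have hwc := hw.continuous
  have hvanish (y : ℝ) (hy : y = -1 ∨ y = 0) : ∀ x ∈ Ico R t, w (x, y) = 0 := fun x hx =>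
    hzero _ (mk_mem_closure_GamR_sdiff_Gam ⟨hR.trans hx.1, hx.2⟩ hy)
  simpa using wirtinger_inequality_strip hw measurableSet_Ico (by norm_num)
    ((integrableOn_GamR (by fun_prop) t).mono_set harm)
    ((integrableOn_GamR (continuous_gradSq2 hw) t).mono_set harm)
    (hvanish (-1) (Or.inl rfl)) (hvanish 0 (Or.inr rfl))

lemma pi_sq_mul_le_on_swapped_arm (hR : 0 ≤ R) (hRt : R ≤ t) (hw : ContDiff ℝ 1 w)
    (hzero : ∀ p ∈ closure (GamR t) \ Gam, w p = 0) :
    π ^ 2 * ∫ p in Ioo (-1) 0 ×ˢ Ico R t, w p ^ 2 ≤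
      ∫ p in Ioo (-1) 0 ×ˢ Ico R t, gradSq2 w p := by
  have hswap := pi_sq_mul_le_on_arm (w := w ∘ Prod.swap) hR hRt
    (hw.comp (contDiff_snd.prodMk contDiff_fst))
    fun p hp => hzero _ (swap_mem_closure_GamR_sdiff_Gam hp)
  have hchange (f : ℝ × ℝ → ℝ) :
      ∫ p in Ico R t ×ˢ Ioo (-1) 0, f p.swap = ∫ p in Ioo (-1) 0 ×ˢ Ico R t, f p :=
    setIntegral_prod_swap _ _ f
  rw [← hchange, ← hchange]
  simp only [← gradSq2_comp_swap (hw.differentiable one_ne_zero)]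
  exact hswap

lemma mul_setIntegral_GamR_le_of_le {l : ℝ} (hR : 0 ≤ R) (hRt : R ≤ t) (hw : ContDiff ℝ 1 w)
    (hzero : ∀ p ∈ closure (GamR t) \ Gam, w p = 0) (hl : l ≤ π ^ 2)
    (hGam : l * ∫ p in GamR R, w p ^ 2 ≤ ∫ p in GamR R, gradSq2 w p) :
    l * ∫ p in GamR t, w p ^ 2 ≤ ∫ p in GamR t, gradSq2 w p := by
  have hwc := hw.continuous
  have hsq : IntegrableOn (fun p => w p ^ 2) (GamR t) := integrableOn_GamR (by fun_prop) t
  have hgrad := integrableOn_GamR (continuous_gradSq2 hw) t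
  have hmono (s : Set (ℝ × ℝ)) : l * ∫ p in s, w p ^ 2 ≤ π ^ 2 * ∫ p in s, w p ^ 2 :=
    mul_le_mul_of_nonneg_right hl (integral_nonneg fun p => sq_nonneg (w p))
  rw [GamR_eq_union_arms hR hRt] at hsq hgrad ⊢
  refine mul_setIntegral_le_union (disjoint_GamR_union_arm_arm hR)
    (measurableSet_Ioo.prod measurableSet_Ico) hsq hgrad ?_
    ((hmono _).trans (pi_sq_mul_le_on_swapped_arm hR hRt hw hzero))
  exact mul_setIntegral_le_union disjoint_GamR_arm (measurableSet_Ico.prod measurableSet_Ioo)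
    hsq.left_of_union hgrad.left_of_union hGam
    ((hmono _).trans (pi_sq_mul_le_on_arm hR hRt hw hzero))

end LongerGuide

section TrialFunction

lemma hasDerivAt_comp_min {f f' : ℝ → ℝ} {c : ℝ} (hf : ∀ x, HasDerivAt f (f' x) x) (hc : f' c = 0)
    (x : ℝ) : HasDerivAt (fun x => f (min x c)) (f' (min x c)) x := by
  rcases lt_trichotomy x c with hx | rfl | hx
  · rw [min_eq_left hx.le]
    refine (hf x).congr_of_eventuallyEq ?_
    filter_upwards [Iio_mem_nhds hx] with y hy
    rw [min_eq_left hy.le]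
  · rw [min_self, ← hasDerivWithinAt_univ, ← Iic_union_Ici (a := x)]
    refine ((hf x).hasDerivWithinAt.congr ?_ ?_).union
      (hc ▸ (hasDerivWithinAt_const x (Ici x) (f x)).congr ?_ ?_)
    · exact fun y hy => by rw [min_eq_left hy]
    · rw [min_self]
    · exact fun y hy => by rw [min_eq_right hy]
    · rw [min_self]
  · rw [min_eq_right hx.le, hc]
    refine (hasDerivAt_const x (f c)).congr_of_eventuallyEq ?_
    filter_upwards [Ioi_mem_nhds hx] with y hy
    rw [min_eq_right hy.le]

/-- A `C¹` approximation of the ramp `x ↦ min x 0` on `[-1, ∞)`, exact at `-1` and on `[0, ∞)`. -/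
def smoothRamp (n : ℕ) (x : ℝ) : ℝ := min x 0 * (1 - (1 + min x 0) ^ (n + 1))

variable (n : ℕ) {x : ℝ}

lemma hasDerivAt_smoothRamp (x : ℝ) : HasDerivAt (smoothRamp n)
    (1 - (1 + min x 0) ^ (n + 1) - (n + 1) * min x 0 * (1 + min x 0) ^ n) x := by
  refine hasDerivAt_comp_min (f := fun y => y * (1 - (1 + y) ^ (n + 1)))
    (f' := fun y => 1 - (1 + y) ^ (n + 1) - (n + 1) * y * (1 + y) ^ n) (fun y => ?_) (by simp) x
  refine ((hasDerivAt_id y).mul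
    ((((hasDerivAt_id y).const_add 1).pow (n + 1)).const_sub 1)).congr_deriv ?_
  simp only [id_eq, Pi.pow_apply, Nat.cast_add, Nat.cast_one, add_tsub_cancel_right]
  ring

lemma deriv_smoothRamp : deriv (smoothRamp n) =
    fun x : ℝ => 1 - (1 + min x 0) ^ (n + 1) - (n + 1) * min x 0 * (1 + min x 0) ^ n :=
  funext fun x => (hasDerivAt_smoothRamp n x).deriv

lemma contDiff_smoothRamp : ContDiff ℝ 1 (smoothRamp n) := by
  rw [contDiff_one_iff_deriv, deriv_smoothRamp]
  exact ⟨fun x => (hasDerivAt_smoothRamp n x).differentiableAt, by fun_prop⟩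

lemma smoothRamp_neg_one : smoothRamp n (-1) = -1 := by
  simp [smoothRamp]

lemma smoothRamp_of_nonneg (hx : 0 ≤ x) : smoothRamp n x = 0 := by
  simp [smoothRamp, hx]

lemma deriv_smoothRamp_of_nonneg (hx : 0 ≤ x) : deriv (smoothRamp n) x = 0 := by
  simp [deriv_smoothRamp, hx]

lemma add_one_mul_one_sub_mul_pow_le {y : ℝ} (hy : y ∈ Icc (0 : ℝ) 1) :
    (n + 1) * (1 - y) * y ^ n ≤ 1 - y ^ (n + 1) := by
  induction n with
  | zero => simp
  | succ n ih =>
    have hpow : y ^ (n + 1) ≤ 1 := pow_le_one₀ hy.1 hy.2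
    have hstep := mul_le_mul_of_nonneg_left ih hy.1
    have hgap := mul_le_mul_of_nonneg_left hpow (sub_nonneg.2 hy.2)
    push_cast
    ring_nf at hstep hgap ⊢
    linarith

lemma smoothRamp_mem_Icc (hx : -1 ≤ x) : smoothRamp n x ∈ Icc (-1 : ℝ) 0 := by
  have hlow : -1 ≤ min x 0 := le_min hx (by norm_num)
  have hup : min x 0 ≤ 0 := min_le_right x 0
  have hpow0 : 0 ≤ (1 + min x 0) ^ (n + 1) := pow_nonneg (by linarith) _
  have hpow1 : (1 + min x 0) ^ (n + 1) ≤ 1 := pow_le_one₀ (by linarith) (by linarith)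
  constructor <;> unfold smoothRamp <;> nlinarith

lemma deriv_smoothRamp_mem_Icc (hx : -1 ≤ x) : deriv (smoothRamp n) x ∈ Icc (0 : ℝ) 2 := by
  rw [deriv_smoothRamp]
  have hlow : -1 ≤ min x 0 := le_min hx (by norm_num)
  have hup : min x 0 ≤ 0 := min_le_right x 0
  have hmem : 1 + min x 0 ∈ Icc (0 : ℝ) 1 := ⟨by linarith, by linarith⟩
  have hpow0 : 0 ≤ (1 + min x 0) ^ (n + 1) := pow_nonneg hmem.1 _
  have hpow1 : (1 + min x 0) ^ (n + 1) ≤ 1 := pow_le_one₀ hmem.1 hmem.2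
  have hprod0 : 0 ≤ (n + 1) * (1 - (1 + min x 0)) * (1 + min x 0) ^ n :=
    mul_nonneg (mul_nonneg (by positivity) (by linarith)) (pow_nonneg hmem.1 _)
  have hprod1 := add_one_mul_one_sub_mul_pow_le n hmem
  constructor <;> linarith

lemma tendsto_smoothRamp (hx : x ∈ Ioo (-1) 0) :
    Tendsto (fun n => smoothRamp n x) atTop (𝓝 x) := by
  have hpow : Tendsto (fun n : ℕ => (1 + x) ^ (n + 1)) atTop (𝓝 0) :=
    (tendsto_add_atTop_iff_nat 1).2 <|
      tendsto_pow_atTop_nhds_zero_of_lt_one (by linarith [hx.1]) (by linarith [hx.2])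
  simpa [smoothRamp, min_eq_left hx.2.le] using (hpow.const_sub 1).const_mul x

lemma tendsto_deriv_smoothRamp (hx : x ∈ Ioo (-1) 0) :
    Tendsto (fun n => deriv (smoothRamp n) x) atTop (𝓝 1) := by
  have h0 : 0 ≤ 1 + x := by linarith [hx.1]
  have h1 : 1 + x < 1 := by linarith [hx.2]
  have hpow : Tendsto (fun n : ℕ => (1 + x) ^ n) atTop (𝓝 0) :=
    tendsto_pow_atTop_nhds_zero_of_lt_one h0 h1
  have hmul : Tendsto (fun n : ℕ => (n : ℝ) * (1 + x) ^ n) atTop (𝓝 0) :=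
    tendsto_self_mul_const_pow_of_lt_one h0 h1
  have hlim := ((hpow.mul_const (1 + x)).const_sub 1).sub ((hmul.add hpow).const_mul x)
  simp only [zero_mul, add_zero, mul_zero, sub_zero] at hlim
  refine hlim.congr fun n => ?_
  simp only [deriv_smoothRamp, min_eq_left hx.2.le]
  ring

lemma tendsto_integral_smoothRamp_neg {G : ℝ × ℝ → ℝ} (hG : Continuous G) :
    Tendsto (fun n => ∫ x in (-1)..0, G (smoothRamp n x, deriv (smoothRamp n) x)) atTop
      (𝓝 (∫ x in (-1)..0, G (x, 1))) := by
  obtain ⟨C, hC⟩ := (isCompact_Icc.prod isCompact_Icc).exists_bound_of_continuousOn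
    (s := Icc (-1 : ℝ) 0 ×ˢ Icc (0 : ℝ) 2) hG.continuousOn
  refine intervalIntegral.tendsto_integral_filter_of_dominated_convergence (fun _ => C)
    (.of_forall fun n => ?_) (.of_forall fun n => .of_forall fun x hx => ?_) (by simp) ?_
  · have hramp := (contDiff_smoothRamp n).continuous
    have hderiv := (contDiff_smoothRamp n).continuous_deriv_one
    exact Continuous.aestronglyMeasurable (by fun_prop)
  · rw [uIoc_of_le (by norm_num)] at hx
    exact hC _ ⟨smoothRamp_mem_Icc n hx.1.le, deriv_smoothRamp_mem_Icc n hx.1.le⟩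
  · filter_upwards [Measure.ae_ne volume (0 : ℝ)] with x hx0 hx
    rw [uIoc_of_le (by norm_num)] at hx
    have hx' : x ∈ Ioo (-1) 0 := ⟨hx.1, hx.2.lt_of_ne hx0⟩
    exact (hG.tendsto (x, 1)).comp
      ((tendsto_smoothRamp hx').prodMk_nhds (tendsto_deriv_smoothRamp hx'))

lemma tendsto_integral_smoothRamp {G : ℝ × ℝ → ℝ} (hG : Continuous G) {R : ℝ} (hR : 0 ≤ R) :
    Tendsto (fun n => ∫ x in (-1)..R, G (smoothRamp n x, deriv (smoothRamp n) x)) atTop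
      (𝓝 ((∫ x in (-1)..0, G (x, 1)) + R * G (0, 0))) := by
  refine ((tendsto_integral_smoothRamp_neg hG).add_const (R * G (0, 0))).congr fun n => ?_
  have hramp := (contDiff_smoothRamp n).continuous
  have hderiv := (contDiff_smoothRamp n).continuous_deriv_one
  have hcont : Continuous fun x => G (smoothRamp n x, deriv (smoothRamp n) x) := by fun_prop
  have hpos : ∫ x in 0..R, G (smoothRamp n x, deriv (smoothRamp n) x) = R * G (0, 0) := by
    rw [intervalIntegral.integral_congr (g := fun _ => G (0, 0))]
    · simp
    · intro x hx
      rw [uIcc_of_le hR] at hx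
      simp only [smoothRamp_of_nonneg n hx.1, deriv_smoothRamp_of_nonneg n hx.1]
  rw [← intervalIntegral.integral_add_adjacent_intervals (hcont.intervalIntegrable (-1) 0)
    (hcont.intervalIntegrable 0 R), hpos]

end TrialFunction

section UpperBound

variable {R : ℝ}

lemma setIntegral_GamR_eq_Ioo_prod {f : ℝ × ℝ → ℝ}
    (hf : ∀ p : ℝ × ℝ, 0 ≤ p.1 → 0 ≤ p.2 → f p = 0) :
    ∫ p in GamR R, f p = ∫ p in Ioo (-1) R ×ˢ Ioo (-1) R, f p := by
  refine (setIntegral_eq_of_subset_of_forall_sdiff_eq_zero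
    (measurableSet_Ioo.prod measurableSet_Ioo) (GamR_subset_Ioo_prod R) fun p hp => hf p ?_ ?_).symm
  all_goals
    have hneg : ¬(p.1 < 0 ∨ p.2 < 0) := fun h => hp.2 (mem_GamR_iff.2 ⟨hp.1.1, hp.1.2, h⟩)
    grind

lemma setIntegral_Ioo_prod_mul {a b : ℝ} (hab : a ≤ b) (f g : ℝ → ℝ) :
    ∫ p in Ioo a b ×ˢ Ioo a b, f p.1 * g p.2 = (∫ x in a..b, f x) * ∫ x in a..b, g x := by
  simp only [intervalIntegral.integral_of_le hab, integral_Ioc_eq_integral_Ioo]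
  exact setIntegral_prod_mul f g _ _

lemma setIntegral_Ioo_prod_sq_mul_add_mul {a b : ℝ} (hab : a ≤ b) {f g h k : ℝ → ℝ}
    (hf : Continuous f) (hg : Continuous g) (hh : Continuous h) (hk : Continuous k) :
    ∫ p in Ioo a b ×ˢ Ioo a b, (f p.1 * g p.2 + h p.1 * k p.2) ^ 2 =
      (∫ x in a..b, f x ^ 2) * (∫ x in a..b, g x ^ 2) +
        2 * (∫ x in a..b, f x * h x) * (∫ x in a..b, g x * k x) +
        (∫ x in a..b, h x ^ 2) * ∫ x in a..b, k x ^ 2 := by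
  have integrable {F : ℝ × ℝ → ℝ} (hF : Continuous F) : IntegrableOn F (Ioo a b ×ˢ Ioo a b) :=
    integrableOn_Ioo_prod_Ioo hF
  have hexpand (p : ℝ × ℝ) : (f p.1 * g p.2 + h p.1 * k p.2) ^ 2 =
      f p.1 ^ 2 * g p.2 ^ 2 + 2 * (f p.1 * h p.1 * (g p.2 * k p.2)) + h p.1 ^ 2 * k p.2 ^ 2 := by
    ring
  simp only [hexpand]
  rw [integral_add (integrable (by fun_prop)) (integrable (by fun_prop)),
    integral_add (integrable (by fun_prop)) (integrable (by fun_prop)), integral_const_mul,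
    setIntegral_Ioo_prod_mul hab (fun x => f x ^ 2) (fun x => g x ^ 2),
    setIntegral_Ioo_prod_mul hab (fun x => f x * h x) (fun x => g x * k x),
    setIntegral_Ioo_prod_mul hab (fun x => h x ^ 2) (fun x => k x ^ 2), mul_assoc]

lemma deriv_eq_zero_of_forall_ge_eq_zero {f : ℝ → ℝ} {c x : ℝ} (hf : DifferentiableAt ℝ f x)
    (hzero : ∀ y, c ≤ y → f y = 0) (hx : c ≤ x) : deriv f x = 0 := by
  have hcongr : EqOn f (fun _ => 0) (Ici c) := hzero
  rw [← hf.derivWithin (uniqueDiffOn_Ici c x hx), derivWithin_congr hcongr (hzero x hx),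
    derivWithin_fun_const, Pi.zero_apply]

lemma admR_mul_add_mul {a b : ℝ → ℝ} (ha : ContDiff ℝ 1 a) (hb : ContDiff ℝ 1 b)
    (ha1 : a (-1) = 0) (hb1 : b (-1) = 0) (hb0 : ∀ x, 0 ≤ x → b x = 0) :
    AdmR R fun p => a p.1 * b p.2 + b p.1 * a p.2 := by
  refine ⟨by fun_prop, fun p hp => ?_⟩
  rcases eq_neg_one_or_nonneg_of_mem_closure_GamR_sdiff (DirB_subset R hp) with h | h | ⟨h₁, h₂⟩
  · simp [h, ha1, hb1]
  · simp [h, ha1, hb1]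
  · simp [hb0 _ h₁, hb0 _ h₂]

lemma lamR_mul_le_of_symmetric_product {a b : ℝ → ℝ} (hR : 0 ≤ R) (ha : ContDiff ℝ 1 a)
    (hb : ContDiff ℝ 1 b) (ha1 : a (-1) = 0) (hb1 : b (-1) = 0) (hb0 : ∀ x, 0 ≤ x → b x = 0) :
    lamR R * ((∫ x in (-1)..R, a x ^ 2) * (∫ x in (-1)..R, b x ^ 2) +
        (∫ x in (-1)..R, a x * b x) ^ 2) ≤
      (∫ x in (-1)..R, deriv a x ^ 2) * (∫ x in (-1)..R, b x ^ 2) +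
        2 * (∫ x in (-1)..R, deriv a x * deriv b x) * (∫ x in (-1)..R, a x * b x) +
        (∫ x in (-1)..R, deriv b x ^ 2) * ∫ x in (-1)..R, a x ^ 2 := by
  have hle : (-1 : ℝ) ≤ R := by linarith
  have hac := ha.continuous
  have hbc := hb.continuous
  have ha'c := ha.continuous_deriv_one
  have hb'c := hb.continuous_deriv_one
  have hb'0 (x : ℝ) : 0 ≤ x → deriv b x = 0 :=
    deriv_eq_zero_of_forall_ge_eq_zero (hb.differentiable one_ne_zero x) hb0
  have hform := lamR_mul_le_of_admR (admR_mul_add_mul (R := R) ha hb ha1 hb1 hb0)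
  simp only [gradSq2_mul_add_mul (ha.differentiable one_ne_zero)
    (hb.differentiable one_ne_zero)] at hform
  rw [setIntegral_GamR_eq_Ioo_prod fun p h₁ h₂ => by simp [hb0 _ h₁, hb0 _ h₂],
    setIntegral_GamR_eq_Ioo_prod fun p h₁ h₂ => by
      simp [hb0 _ h₁, hb0 _ h₂, hb'0 _ h₁, hb'0 _ h₂],
    integral_add (integrableOn_Ioo_prod_Ioo (by fun_prop))
      (integrableOn_Ioo_prod_Ioo (by fun_prop)),
    setIntegral_Ioo_prod_sq_mul_add_mul hle hac hbc hbc hac,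
    setIntegral_Ioo_prod_sq_mul_add_mul hle ha'c hbc hb'c hac,
    setIntegral_Ioo_prod_sq_mul_add_mul hle hac hb'c hbc ha'c] at hform
  simp only [mul_comm (b _) (a _), mul_comm (deriv b _) (deriv a _)] at hform
  linarith

lemma integral_sin_pi_mul_sq : ∫ x in (-1 : ℝ)..0, sin (π * x) ^ 2 = 1 / 2 := by
  rw [intervalIntegral.integral_comp_mul_left (fun x => sin x ^ 2) pi_ne_zero, integral_sin_sq]
  simp only [mul_neg, mul_one, mul_zero, sin_neg, sin_pi, sin_zero, cos_neg, cos_pi, cos_zero,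
    smul_eq_mul]
  field_simp
  ring

lemma integral_cos_pi_mul_sq : ∫ x in (-1 : ℝ)..0, cos (π * x) ^ 2 = 1 / 2 := by
  rw [intervalIntegral.integral_comp_mul_left (fun x => cos x ^ 2) pi_ne_zero, integral_cos_sq]
  simp only [mul_neg, mul_one, mul_zero, sin_neg, sin_pi, sin_zero, cos_neg, cos_pi, cos_zero,
    smul_eq_mul]
  field_simp
  ring

lemma integral_one_add_mul_sin_pi_mul :
    ∫ x in (-1 : ℝ)..0, (1 + x) * sin (π * x) = -(1 / π) := by
  have hderiv (x : ℝ) : HasDerivAt (fun x => sin (π * x) / π ^ 2 - (1 + x) * cos (π * x) / π)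
      ((1 + x) * sin (π * x)) x := by
    have hlin : HasDerivAt (fun x => π * x) π x := by simpa using (hasDerivAt_id x).const_mul π
    refine ((hlin.sin.div_const (π ^ 2)).sub
      ((((hasDerivAt_id x).const_add 1).mul hlin.cos).div_const π)).congr_deriv ?_
    simp only [id_eq]
    field_simp
    ring
  rw [intervalIntegral.integral_eq_sub_of_hasDerivAt (fun x _ => hderiv x)
    (Continuous.intervalIntegrable (by fun_prop) _ _)]
  simp

lemma deriv_neg_sin_pi_mul_smoothRamp (n : ℕ) (x : ℝ) :
    deriv (fun x => -sin (π * smoothRamp n x)) x =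
      -(π * cos (π * smoothRamp n x) * deriv (smoothRamp n) x) := by
  have hramp := (contDiff_smoothRamp n).differentiable one_ne_zero x
  rw [((hramp.hasDerivAt.const_mul π).sin.fun_neg).deriv]
  ring

lemma lamR_mul_le_of_smoothRamp (hR : 0 ≤ R) (n : ℕ) :
    lamR R * ((∫ x in (-1)..R, (1 + smoothRamp n x) ^ 2) *
          (∫ x in (-1)..R, sin (π * smoothRamp n x) ^ 2) +
        (∫ x in (-1)..R, (1 + smoothRamp n x) * -sin (π * smoothRamp n x)) ^ 2) ≤
      (∫ x in (-1)..R, deriv (smoothRamp n) x ^ 2) *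
          (∫ x in (-1)..R, sin (π * smoothRamp n x) ^ 2) +
        2 * (∫ x in (-1)..R, deriv (smoothRamp n) x *
            -(π * cos (π * smoothRamp n x) * deriv (smoothRamp n) x)) *
          (∫ x in (-1)..R, (1 + smoothRamp n x) * -sin (π * smoothRamp n x)) +
        (∫ x in (-1)..R, (π * cos (π * smoothRamp n x) * deriv (smoothRamp n) x) ^ 2) *
          ∫ x in (-1)..R, (1 + smoothRamp n x) ^ 2 := by
  have hramp := contDiff_smoothRamp n
  have h := lamR_mul_le_of_symmetric_product (a := fun x => 1 + smoothRamp n x)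
    (b := fun x => -sin (π * smoothRamp n x)) hR (by fun_prop) (by fun_prop)
    (by simp [smoothRamp_neg_one]) (by simp [smoothRamp_neg_one])
    fun x hx => by simp [smoothRamp_of_nonneg n hx]
  simpa only [deriv_neg_sin_pi_mul_smoothRamp, deriv_const_add', neg_sq] using h

theorem lamR_le_pi_sq (hR : 0 ≤ R) : lamR R ≤ π ^ 2 := by
  have lim {G : ℝ × ℝ → ℝ} (hG : Continuous G) {I : ℝ}
      (hI : (∫ x in (-1)..0, G (x, 1)) + R * G (0, 0) = I) :
      Tendsto (fun n => ∫ x in (-1)..R, G (smoothRamp n x, deriv (smoothRamp n) x)) atTop (𝓝 I) :=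
    hI ▸ tendsto_integral_smoothRamp hG hR
  have haa := lim (G := fun q => (1 + q.1) ^ 2) (I := 1 / 3 + R) (by fun_prop) (by
    norm_num [intervalIntegral.integral_comp_add_left (fun x : ℝ => x ^ 2)])
  have hbb := lim (G := fun q => sin (π * q.1) ^ 2) (I := 1 / 2) (by fun_prop) (by
    simp [integral_sin_pi_mul_sq])
  have hab := lim (G := fun q => (1 + q.1) * -sin (π * q.1)) (I := 1 / π) (by fun_prop) (by
    simp [integral_one_add_mul_sin_pi_mul])
  have ha'a' := lim (G := fun q => q.2 ^ 2) (I := 1) (by fun_prop) (by simp)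
  have ha'b' := lim (G := fun q => q.2 * -(π * cos (π * q.1) * q.2)) (I := 0) (by fun_prop)
    (by simp)
  have hb'b' := lim (G := fun q => (π * cos (π * q.1) * q.2) ^ 2) (I := π ^ 2 / 2)
    (by fun_prop) (by simp [mul_pow, integral_cos_pi_mul_sq, div_eq_mul_inv])
  have hlimit := le_of_tendsto_of_tendsto' (((haa.mul hbb).add (hab.pow 2)).const_mul (lamR R))
    (((ha'a'.mul hbb).add ((ha'b'.const_mul 2).mul hab)).add (hb'b'.mul haa))
    (lamR_mul_le_of_smoothRamp hR)
  have hnorm : 0 < (1 / 3 + R) * (1 / 2) + (1 / π) ^ 2 := by positivity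
  have hinv : π ^ 2 * (1 / π) ^ 2 = 1 := by field_simp
  refine le_of_mul_le_mul_right (hlimit.trans ?_) hnorm
  linarith

end UpperBound

section Fubini

variable {α β γ E : Type*} [MeasurableSpace α] [MeasurableSpace β] [MeasurableSpace γ]
  [NormedAddCommGroup E] {μ : Measure α} {ν : Measure β} {ρ : Measure γ} [SFinite ν]
  [SFinite ρ] {f : α × β × γ → E}

lemma integrable_comp_prodAssoc (hf : Integrable f (μ.prod (ν.prod ρ))) :
    Integrable (fun z : (α × β) × γ => f (z.1.1, z.1.2, z.2)) ((μ.prod ν).prod ρ) :=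
  ((measurePreserving_prodAssoc μ ν ρ).integrable_comp_emb
    MeasurableEquiv.prodAssoc.measurableEmbedding).2 hf

lemma integral_prod_prod_symm [SFinite μ] [NormedSpace ℝ E]
    (hf : Integrable f (μ.prod (ν.prod ρ))) :
    ∫ x, f x ∂μ.prod (ν.prod ρ) = ∫ t, ∫ p, f (p.1, p.2, t) ∂μ.prod ν ∂ρ :=
  ((measurePreserving_prodAssoc μ ν ρ).integral_comp' f).symm.trans
    (integral_prod_symm _ (integrable_comp_prodAssoc hf))

end Fubini

section Slicing

variable {R t : ℝ} {u f : ℝ × ℝ × ℝ → ℝ}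

lemma isOpen_Lam3 : IsOpen Lam3 :=
  isOpen_Ioo.preimage (f := fun x : ℝ × ℝ × ℝ => min x.1 (min x.2.1 x.2.2)) (by fun_prop)

lemma isOpen_Om3 (R : ℝ) : IsOpen (Om3 R) := by
  simp only [Om3, mem_GamR_iff, mem_Ioo, ← min_lt_iff]
  refine .and ?_ (.and (.and ?_ ?_) (.and (.and ?_ ?_) ?_))
  all_goals exact isOpen_lt (by fun_prop) (by fun_prop)

lemma mk_mem_Lam3_iff (ht : 0 ≤ t) {p : ℝ × ℝ} : (p.1, p.2, t) ∈ Lam3 ↔ p ∈ Gam := by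
  simp only [Lam3, Gam, mem_ofPred_eq, lt_min_iff, min_lt_iff]
  grind

lemma mk_mem_frontier_inter_frontier (hR : 0 ≤ R) (hRt : R < t) {p : ℝ × ℝ}
    (hp : p ∈ closure (GamR t) \ Gam) :
    (p.1, p.2, t) ∈ frontier (Om3 R) ∩ frontier Lam3 := by
  have hLam {q : ℝ × ℝ} : (q.1, q.2, t) ∈ Lam3 ↔ q ∈ Gam := mk_mem_Lam3_iff (hR.trans hRt.le)
  have hclosure {s : Set (ℝ × ℝ × ℝ)} (h : ∀ q ∈ GamR t, (q.1, q.2, t) ∈ s) :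
      (p.1, p.2, t) ∈ closure s :=
    map_mem_closure (f := fun q : ℝ × ℝ => (q.1, q.2, t)) (by fun_prop) hp.1 h
  rw [(isOpen_Om3 R).frontier_eq, isOpen_Lam3.frontier_eq]
  exact ⟨⟨hclosure fun q hq => ⟨hRt, hq⟩, fun h => hp.2 h.2.1⟩,
    ⟨hclosure fun q hq => hLam.2 hq.1, fun h => hp.2 (hLam.1 h)⟩⟩

lemma integral_indicator_Om3_slice (f : ℝ × ℝ × ℝ → ℝ) (R t : ℝ) :
    ∫ p : ℝ × ℝ, (Om3 R).indicator f (p.1, p.2, t) =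
      (Ioi R).indicator (fun t => ∫ p in GamR t, f (p.1, p.2, t)) t := by
  by_cases ht : t ∈ Ioi R
  · rw [indicator_of_mem ht, ← integral_indicator (isOpen_GamR t).measurableSet]
    congr 1 with p
    have hmem : (p.1, p.2, t) ∈ Om3 R ↔ p ∈ GamR t := and_iff_right ht
    by_cases hp : p ∈ GamR t <;> simp [hmem, hp]
  · rw [indicator_of_notMem ht]
    exact integral_eq_zero_of_ae <| .of_forall fun p => indicator_of_notMem (fun h => ht h.1) f

lemma setIntegral_Om3 (hf : IntegrableOn f (Om3 R)) :
    ∫ x in Om3 R, f x = ∫ t in Ioi R, ∫ p in GamR t, f (p.1, p.2, t) := by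
  have hmeas := (isOpen_Om3 R).measurableSet
  rw [← integral_indicator hmeas, ← integral_indicator measurableSet_Ioi]
  simp only [← integral_indicator_Om3_slice]
  exact integral_prod_prod_symm (hf.integrable_indicator hmeas)

lemma integrableOn_setIntegral_GamR (hf : IntegrableOn f (Om3 R)) :
    IntegrableOn (fun t => ∫ p in GamR t, f (p.1, p.2, t)) (Ioi R) := by
  have hind := hf.integrable_indicator (isOpen_Om3 R).measurableSet
  rw [← integrable_indicator_iff measurableSet_Ioi]
  refine (integrable_comp_prodAssoc hind).integral_prod_right.congr (.of_forall fun t => ?_)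
  exact integral_indicator_Om3_slice f R t

lemma lamR_mul_le_on_slice (hR : 0 ≤ R) (hRt : R < t) (hu : ContDiff ℝ 1 u)
    (hzero : ∀ x ∈ frontier (Om3 R) ∩ frontier Lam3, u x = 0) :
    lamR R * ∫ p in GamR t, u (p.1, p.2, t) ^ 2 ≤ ∫ p in GamR t, gradSq3 u (p.1, p.2, t) := by
  have hw : ContDiff ℝ 1 fun p : ℝ × ℝ => u (p.1, p.2, t) := by fun_prop
  have hw0 : ∀ p ∈ closure (GamR t) \ Gam, u (p.1, p.2, t) = 0 := fun p hp =>
    hzero _ (mk_mem_frontier_inter_frontier hR hRt hp)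
  have hgrad := continuous_gradSq3 hu
  calc lamR R * ∫ p in GamR t, u (p.1, p.2, t) ^ 2
      ≤ ∫ p in GamR t, gradSq2 (fun q => u (q.1, q.2, t)) p :=
        mul_setIntegral_GamR_le_of_le hR hRt.le hw hw0 (lamR_le_pi_sq hR)
          (lamR_mul_le_of_admR (.of_vanishing hRt.le hw hw0))
    _ ≤ ∫ p in GamR t, gradSq3 u (p.1, p.2, t) :=
        setIntegral_mono (integrableOn_GamR (continuous_gradSq2 hw) t)
          (integrableOn_GamR (by fun_prop) t)
          fun p => gradSq2_slice_le_gradSq3 (hu.differentiable one_ne_zero) p t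

lemma integrable_sq_of_hasCompactSupport (hu : Continuous u) (hsupp : HasCompactSupport u) :
    Integrable fun x => u x ^ 2 :=
  Continuous.integrable_of_hasCompactSupport (by fun_prop)
    (hsupp.comp_left (g := fun y : ℝ => y ^ 2) (by simp))

lemma integrable_gradSq3_of_hasCompactSupport (hu : ContDiff ℝ 1 u) (hsupp : HasCompactSupport u) :
    Integrable (gradSq3 u) :=
  (continuous_gradSq3 hu).integrable_of_hasCompactSupport (hasCompactSupport_gradSq3 hsupp)

end Slicing

theorem Om3_form_lower_bound_general {R : ℝ} (hR : 0 ≤ R) {u : ℝ × ℝ × ℝ → ℝ}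
    (hu : ContDiff ℝ 1 u) (hsq : IntegrableOn (fun x => u x ^ 2) (Om3 R))
    (hgrad : IntegrableOn (gradSq3 u) (Om3 R))
    (hzero : ∀ x ∈ frontier (Om3 R) ∩ frontier Lam3, u x = 0) :
    lamR R * ∫ x in Om3 R, u x ^ 2 ≤ ∫ x in Om3 R, gradSq3 u x := by
  rw [setIntegral_Om3 hsq, setIntegral_Om3 hgrad, ← integral_const_mul]
  exact setIntegral_mono_on ((integrableOn_setIntegral_GamR hsq).const_mul _)
    (integrableOn_setIntegral_GamR hgrad) measurableSet_Ioi
    fun t ht => lamR_mul_le_on_slice hR ht hu hzero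

/-- key estimate in §3.1: for every `R > 0` and every
`u ∈ H¹(Ω_R³)` vanishing on `∂Ω_R³ ∩ ∂Λ` (modelled by a compactly supported `C¹`
function), one has `∫_{Ω_R³} |∇u|² dx ≥ λ₁(Γ_R) ∫_{Ω_R³} |u|² dx`. -/
theorem Om3_form_lower_bound :
    ∀ R : ℝ, 0 < R → ∀ u : ℝ × ℝ × ℝ → ℝ,
      ContDiff ℝ 1 u → HasCompactSupport u →
      (∀ x ∈ frontier (Om3 R) ∩ frontier Lam3, u x = 0) →
      lamR R * ∫ x in Om3 R, (u x) ^ 2 ≤ ∫ x in Om3 R, gradSq3 u x := by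
  intro R hR u hu hsupp hzero
  exact Om3_form_lower_bound_general hR.le hu
    (integrable_sq_of_hasCompactSupport hu.continuous hsupp).integrableOn
    (integrable_gradSq3_of_hasCompactSupport hu hsupp).integrableOn hzero
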